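/- arXiv:2204.06686 — 2 statements merged into one kernel-verified Lean document; each statement's English description precedes it below -/
import Mathlib

section
/- There exists an absolute constant c > 0 such that for all n ∈ ℕ and all functions f : {0,1}^n → {0,1} with var(f) > 0, E_x[√(s_f(x))] ≥ c · var(f) · √(log(1/var(f))). -/
open Finset

noncomputable section

/-- Expectation over the uniform distribution on `{0,1}^n`. -/
def hcExp (n : ℕ) (g : (Fin n → Bool) → ℝ) : ℝ :=
  (∑ x : Fin n → Bool, g x) / 2 ^ n

/-- Flip the `i`-th coordinate of `x`. -/
def hcFlip {n : ℕ} (x : Fin n → Bool) (i : Fin n) : Fin n → Bool :=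
  Function.update x i (!(x i))

/-- Sensitivity of `f` at `x`. -/
def sens {n : ℕ} (f : (Fin n → Bool) → Bool) (x : Fin n → Bool) : ℕ :=
  (Finset.univ.filter fun i => f (hcFlip x i) ≠ f x).card

/-- `f` with values in `{0,1} ⊆ ℝ`. -/
def toReal {n : ℕ} (f : (Fin n → Bool) → Bool) : (Fin n → Bool) → ℝ :=
  fun x => if f x then 1 else 0

/-- Variance of a Boolean function. -/
def hcVar (n : ℕ) (f : (Fin n → Bool) → Bool) : ℝ :=
  hcExp n (toReal f) - (hcExp n (toReal f)) ^ 2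

/-- Influence of coordinate `i`. -/
def influence (n : ℕ) (f : (Fin n → Bool) → Bool) (i : Fin n) : ℝ :=
  hcExp n (fun x => if f (hcFlip x i) = f x then 0 else 1)

/-- Fourier character. -/
def chi {n : ℕ} (S : Finset (Fin n)) (x : Fin n → Bool) : ℝ :=
  ∏ i ∈ S, (if x i then (-1 : ℝ) else 1)

/-- Fourier coefficient of `g` at `S`. -/
def fcoef (n : ℕ) (g : (Fin n → Bool) → ℝ) (S : Finset (Fin n)) : ℝ :=
  hcExp n (fun x => g x * chi S x)

/-- Derivative of `g` along coordinate `i`. -/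
def derivOn {n : ℕ} (g : (Fin n → Bool) → ℝ) (i : Fin n) (x : Fin n → Bool) : ℝ :=
  g (Function.update x i false) - g (Function.update x i true)

/-- Euclidean norm of the gradient of `g` at `x`. -/
def gradNorm2 {n : ℕ} (g : (Fin n → Bool) → ℝ) (x : Fin n → Bool) : ℝ :=
  Real.sqrt (∑ i, (derivOn g i x) ^ 2)

/-- `ℓ_p` norm of the gradient of `g` at `x`. -/
def gradNormP {n : ℕ} (p : ℝ) (g : (Fin n → Bool) → ℝ) (x : Fin n → Bool) : ℝ :=
  (∑ i, |derivOn g i x| ^ p) ^ (1 / p)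

/-- Fourier weight at exactly level `d`. -/
def wEq (n : ℕ) (g : (Fin n → Bool) → ℝ) (d : ℕ) : ℝ :=
  ∑ S ∈ Finset.univ.filter (fun S : Finset (Fin n) => S.card = d), (fcoef n g S) ^ 2

/-- Approximate level-`d` Fourier weight: levels in `[d, 2d)`. -/
def wApprox (n : ℕ) (g : (Fin n → Bool) → ℝ) (d : ℕ) : ℝ :=
  ∑ S ∈ Finset.univ.filter (fun S : Finset (Fin n) => d ≤ S.card ∧ S.card < 2 * d),
    (fcoef n g S) ^ 2

/-- Fourier weight at levels `≥ d`. -/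
def wGe (n : ℕ) (g : (Fin n → Bool) → ℝ) (d : ℕ) : ℝ :=
  ∑ S ∈ Finset.univ.filter (fun S : Finset (Fin n) => d ≤ S.card), (fcoef n g S) ^ 2

/-! Talagrand's inequality follows by induction on the dimension from a two-point inequality, in the
style of Bobkov. Let `K p = p (√(1 - log p) - 1)`; we show `K (E f) ≤ E √s_f`. Split the cube along
one coordinate, and let `a` and `b` be the means of the two restrictions of `f`. The sensitivity at
a point is that of the restriction plus the indicator that the split edge is sensitive, and this
indicator has mean at least `|a - b|`. Minkowski's inequality for `√(u² + v²)` and the induction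
hypothesis then give `E √s_f ≥ √(((K a + K b) / 2)² + (a - b)²)`, which is at least
`K ((a + b) / 2)` by the two-point inequality. If `E f ≤ 1/2`, then `K (E f)` dominates
`var f √(log (1 / var f))` up to a constant; otherwise negate `f`. -/

section Expectation

variable {n : ℕ}

lemma hcExp_const (n : ℕ) (c : ℝ) : hcExp n (fun _ => c) = c := by
  simp [hcExp]

lemma hcExp_sub (g h : (Fin n → Bool) → ℝ) :
    hcExp n (fun x => g x - h x) = hcExp n g - hcExp n h := by
  simp only [hcExp, sum_sub_distrib, sub_div]

lemma hcExp_mono {g h : (Fin n → Bool) → ℝ} (hgh : ∀ x, g x ≤ h x) : hcExp n g ≤ hcExp n h := by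
  unfold hcExp
  gcongr
  exact hgh _

lemma hcExp_nonneg {g : (Fin n → Bool) → ℝ} (hg : ∀ x, 0 ≤ g x) : 0 ≤ hcExp n g :=
  div_nonneg (sum_nonneg fun x _ => hg x) (by positivity)

lemma abs_hcExp_le (g : (Fin n → Bool) → ℝ) : |hcExp n g| ≤ hcExp n fun x => |g x| := by
  rw [hcExp, hcExp, abs_div, abs_of_pos (by positivity : (0 : ℝ) < 2 ^ n)]
  gcongr
  exact abs_sum_le_sum_abs _ _

lemma hcExp_zero (g : (Fin 0 → Bool) → ℝ) : hcExp 0 g = g default := by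
  rw [hcExp, Fintype.sum_unique, pow_zero, div_one]
  exact congrArg g (Subsingleton.elim _ _)

lemma hcExp_succ (g : (Fin (n + 1) → Bool) → ℝ) :
    hcExp (n + 1) g =
      (hcExp n (fun x => g (Fin.cons true x)) + hcExp n (fun x => g (Fin.cons false x))) / 2 := by
  have sum_cons : ∑ x, g x = ∑ x : Fin n → Bool, g (Fin.cons true x) +
      ∑ x : Fin n → Bool, g (Fin.cons false x) := by
    rw [← (Fin.consEquiv fun _ => Bool).sum_comp g, Fintype.sum_prod_type, Fintype.sum_bool]
    rfl
  rw [hcExp, sum_cons, pow_succ, hcExp, hcExp]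
  field_simp

lemma sqrt_sq_sum_add_sq_sum_le {ι : Type*} (s : Finset ι) (u v : ι → ℝ) :
    √((∑ i ∈ s, u i) ^ 2 + (∑ i ∈ s, v i) ^ 2) ≤ ∑ i ∈ s, √(u i ^ 2 + v i ^ 2) := by
  have triangle := norm_sum_le s fun i => (u i + v i * Complex.I : ℂ)
  rw [sum_add_distrib, ← sum_mul, ← Complex.ofReal_sum, ← Complex.ofReal_sum] at triangle
  simpa only [Complex.norm_add_mul_I] using triangle

lemma sqrt_sq_hcExp_add_sq_hcExp_le (u v : (Fin n → Bool) → ℝ) :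
    √(hcExp n u ^ 2 + hcExp n v ^ 2) ≤ hcExp n fun x => √(u x ^ 2 + v x ^ 2) := by
  simp only [hcExp, div_pow, ← add_div]
  rw [Real.sqrt_div' _ (by positivity), Real.sqrt_sq (by positivity)]
  gcongr
  exact sqrt_sq_sum_add_sq_sum_le _ u v

end Expectation

section BooleanFunction

variable {n : ℕ}

lemma toReal_mem_Icc (f : (Fin n → Bool) → Bool) (x : Fin n → Bool) :
    toReal f x ∈ Set.Icc 0 1 := by
  unfold toReal
  split_ifs <;> simp

lemma hcExp_toReal_mem_Icc (f : (Fin n → Bool) → Bool) :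
    hcExp n (toReal f) ∈ Set.Icc 0 1 :=
  ⟨hcExp_nonneg fun x => (toReal_mem_Icc f x).1,
    (hcExp_mono fun x => (toReal_mem_Icc f x).2).trans_eq (hcExp_const n 1)⟩

lemma hcExp_toReal_not (f : (Fin n → Bool) → Bool) :
    hcExp n (toReal fun x => !f x) = 1 - hcExp n (toReal f) := by
  have toReal_not : (toReal fun x => !f x) = fun x => 1 - toReal f x := by
    funext x
    cases h : f x <;> simp [toReal, h]
  rw [toReal_not, hcExp_sub, hcExp_const]

lemma hcVar_not (f : (Fin n → Bool) → Bool) : hcVar n (fun x => !f x) = hcVar n f := by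
  rw [hcVar, hcExp_toReal_not, hcVar]
  ring

lemma sens_not (f : (Fin n → Bool) → Bool) (x : Fin n → Bool) :
    sens (fun y => !f y) x = sens f x := by
  simp [sens]

/-- The restriction of `f` to the subcube where coordinate `0` equals `b`, as a function of the
remaining coordinates. -/
def firstSlice (f : (Fin (n + 1) → Bool) → Bool) (b : Bool) : (Fin n → Bool) → Bool :=
  fun x => f (Fin.cons b x)

lemma hcExp_toReal_eq_firstSlice (f : (Fin (n + 1) → Bool) → Bool) :
    hcExp (n + 1) (toReal f) =
      (hcExp n (toReal (firstSlice f true)) + hcExp n (toReal (firstSlice f false))) / 2 :=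
  hcExp_succ _

lemma sens_eq_firstSlice_add (f : (Fin (n + 1) → Bool) → Bool) (x : Fin (n + 1) → Bool) :
    sens f x = sens (firstSlice f (x 0)) (Fin.tail x) + if f (hcFlip x 0) = f x then 0 else 1 := by
  refine Fin.consCases (fun b y => ?_) x
  rw [sens, sens, card_filter, card_filter, Fin.sum_univ_succ, add_comm]
  simp [firstSlice, hcFlip, Fin.cons_update]

lemma influence_zero_eq (f : (Fin (n + 1) → Bool) → Bool) :
    influence (n + 1) f 0 =
      hcExp n fun x => |toReal (firstSlice f true) x - toReal (firstSlice f false) x| := by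
  have indicator_eq (b : Bool) (x : Fin n → Bool) :
      (if f (hcFlip (Fin.cons b x) 0) = f (Fin.cons b x) then (0 : ℝ) else 1) =
        |toReal (firstSlice f true) x - toReal (firstSlice f false) x| := by
    cases b <;> cases ht : f (Fin.cons true x) <;> cases hf : f (Fin.cons false x) <;>
      simp [toReal, firstSlice, hcFlip, ht, hf]
  rw [influence, hcExp_succ]
  simp only [indicator_eq, add_self_div_two]

lemma abs_hcExp_firstSlice_sub_le_influence (f : (Fin (n + 1) → Bool) → Bool) :
    |hcExp n (toReal (firstSlice f true)) - hcExp n (toReal (firstSlice f false))| ≤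
      influence (n + 1) f 0 := by
  rw [influence_zero_eq, ← hcExp_sub]
  exact abs_hcExp_le _

lemma sqrt_sq_firstSlice_add_sq_influence_le (f : (Fin (n + 1) → Bool) → Bool) :
    √(((hcExp n (fun x => √(sens (firstSlice f true) x)) +
        hcExp n (fun x => √(sens (firstSlice f false) x))) / 2) ^ 2 +
      influence (n + 1) f 0 ^ 2) ≤ hcExp (n + 1) fun x => √(sens f x) := by
  have minkowski := sqrt_sq_hcExp_add_sq_hcExp_le
    (fun x : Fin (n + 1) → Bool => √(sens (firstSlice f (x 0)) (Fin.tail x)))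
    (fun x => if f (hcFlip x 0) = f x then 0 else 1)
  rw [hcExp_succ fun x => √(sens (firstSlice f (x 0)) (Fin.tail x))] at minkowski
  simpa [sens_eq_firstSlice_add f, influence] using minkowski

theorem le_hcExp_sqrt_sens_of_two_point {K : ℝ → ℝ} (K_zero : K 0 ≤ 0) (K_one : K 1 ≤ 0)
    (K_nonneg : ∀ p ∈ Set.Icc (0 : ℝ) 1, 0 ≤ K p)
    (two_point : ∀ a ∈ Set.Icc (0 : ℝ) 1, ∀ b ∈ Set.Icc (0 : ℝ) 1,
      K ((a + b) / 2) ≤ √(((K a + K b) / 2) ^ 2 + (a - b) ^ 2))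
    (f : (Fin n → Bool) → Bool) :
    K (hcExp n (toReal f)) ≤ hcExp n fun x => √(sens f x) := by
  induction n with
  | zero =>
    have K_nonpos : K (hcExp 0 (toReal f)) ≤ 0 := by
      rw [hcExp_zero, toReal]
      split_ifs <;> assumption
    exact K_nonpos.trans (hcExp_nonneg fun x => Real.sqrt_nonneg _)
  | succ n ih =>
    have mem (b : Bool) := hcExp_toReal_mem_Icc (firstSlice f b)
    have mean_nonneg := add_nonneg (K_nonneg _ (mem true)) (K_nonneg _ (mem false))
    calc K (hcExp (n + 1) (toReal f))
        ≤ √(((K (hcExp n (toReal (firstSlice f true))) +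
              K (hcExp n (toReal (firstSlice f false)))) / 2) ^ 2 +
            (hcExp n (toReal (firstSlice f true)) -
              hcExp n (toReal (firstSlice f false))) ^ 2) := by
          rw [hcExp_toReal_eq_firstSlice]
          exact two_point _ (mem true) _ (mem false)
      _ ≤ √(((hcExp n (fun x => √(sens (firstSlice f true) x)) +
              hcExp n (fun x => √(sens (firstSlice f false) x))) / 2) ^ 2 +
            influence (n + 1) f 0 ^ 2) := by
          rw [← sq_abs (hcExp n _ - _)]
          gcongr
          · exact ih _
          · exact ih _
          · exact abs_hcExp_firstSlice_sub_le_influence f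
      _ ≤ hcExp (n + 1) fun x => √(sens f x) := sqrt_sq_firstSlice_add_sq_influence_le f

end BooleanFunction

section Profile

/-- The factor `√(1 + log (1 / p))` of the isoperimetric profile. At `p = 0` it takes the value `1`,
since `Real.log 0 = 0`. -/
def sqrtOneSubLog (p : ℝ) : ℝ := √(1 - Real.log p)

/-- The isoperimetric profile: a lower bound for the mean of `√s_f` over all Boolean functions `f`
of mean `p`. Subtracting `1` makes it vanish at `p = 1`. -/
def isoProfile (p : ℝ) : ℝ := p * (sqrtOneSubLog p - 1)

lemma one_le_sqrtOneSubLog {p : ℝ} (hp₀ : 0 ≤ p) (hp₁ : p ≤ 1) : 1 ≤ sqrtOneSubLog p := by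
  rw [sqrtOneSubLog, Real.one_le_sqrt]
  linarith [Real.log_nonpos hp₀ hp₁]

lemma sq_sqrtOneSubLog {p : ℝ} (hp₀ : 0 ≤ p) (hp₁ : p ≤ 1) :
    sqrtOneSubLog p ^ 2 = 1 - Real.log p :=
  Real.sq_sqrt (by linarith [Real.log_nonpos hp₀ hp₁])

lemma mul_log_sub_log_le {p q : ℝ} (hp : 0 ≤ p) (hq : 0 < q) :
    p * (Real.log q - Real.log p) ≤ q - p := by
  rcases hp.eq_or_lt with rfl | hp
  · simpa using hq.le
  · calc p * (Real.log q - Real.log p) = p * Real.log (q / p) := by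
          rw [Real.log_div hq.ne' hp.ne']
      _ ≤ p * (q / p - 1) := by gcongr; exact Real.log_le_sub_one_of_pos (by positivity)
      _ = q - p := by field_simp

lemma mul_sqrtOneSubLog_sub_le {p q : ℝ} (hp₀ : 0 ≤ p) (hp₁ : p ≤ 1) (hq₀ : 0 < q)
    (hq₁ : q ≤ 1) :
    p * (sqrtOneSubLog p - sqrtOneSubLog q) ≤ (q - p) / (sqrtOneSubLog p + sqrtOneSubLog q) := by
  have one_le_p := one_le_sqrtOneSubLog hp₀ hp₁
  have one_le_q := one_le_sqrtOneSubLog hq₀.le hq₁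
  rw [le_div_iff₀ (by linarith)]
  calc p * (sqrtOneSubLog p - sqrtOneSubLog q) * (sqrtOneSubLog p + sqrtOneSubLog q)
      = p * (sqrtOneSubLog p ^ 2 - sqrtOneSubLog q ^ 2) := by ring
    _ = p * (Real.log q - Real.log p) := by
        rw [sq_sqrtOneSubLog hp₀ hp₁, sq_sqrtOneSubLog hq₀.le hq₁]; ring
    _ ≤ q - p := mul_log_sub_log_le hp₀ hq₀

lemma isoProfile_zero : isoProfile 0 = 0 := by simp [isoProfile]

lemma isoProfile_one : isoProfile 1 = 0 := by simp [isoProfile, sqrtOneSubLog]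

lemma isoProfile_nonneg {p : ℝ} (hp : p ∈ Set.Icc (0 : ℝ) 1) : 0 ≤ isoProfile p :=
  mul_nonneg hp.1 (sub_nonneg.2 (one_le_sqrtOneSubLog hp.1 hp.2))

lemma div_sub_div_sqrtOneSubLog_le {m t : ℝ} (ht : 0 ≤ t) (htm : t ≤ m) (hm : 0 < m)
    (hmt : m + t ≤ 1) :
    (m + t) / (sqrtOneSubLog m + sqrtOneSubLog (m + t)) -
        (m - t) / (sqrtOneSubLog m + sqrtOneSubLog (m - t)) ≤ 3 * t / sqrtOneSubLog m := by
  have one_le_m := one_le_sqrtOneSubLog hm.le (by linarith)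
  have one_le_a := one_le_sqrtOneSubLog (p := m - t) (by linarith) (by linarith)
  have one_le_b := one_le_sqrtOneSubLog (p := m + t) (by linarith) hmt
  have endpoints : (m - t) * (sqrtOneSubLog (m - t) - sqrtOneSubLog (m + t)) ≤ t := by
    refine (mul_sqrtOneSubLog_sub_le (by linarith) (by linarith) (by linarith) hmt).trans ?_
    rw [div_le_iff₀ (by linarith)]
    nlinarith
  set P := sqrtOneSubLog m + sqrtOneSubLog (m - t) with hP
  set Q := sqrtOneSubLog m + sqrtOneSubLog (m + t) with hQ
  have one_le_P : 1 ≤ P := by linarith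
  have Q_pos : 0 < Q := by linarith
  calc (m + t) / Q - (m - t) / P
      = (2 * t + (m - t) * (sqrtOneSubLog (m - t) - sqrtOneSubLog (m + t)) / P) / Q := by
        field_simp
        rw [hP, hQ]
        ring
    _ ≤ (2 * t + t) / Q := by
        gcongr
        exact (div_le_div_of_nonneg_right endpoints (by linarith)).trans (div_le_self ht one_le_P)
    _ ≤ 3 * t / sqrtOneSubLog m := by
        rw [show 2 * t + t = 3 * t by ring]
        gcongr
        linarith

lemma mul_isoProfile_second_difference_le {m t : ℝ} (ht : 0 ≤ t) (htm : t ≤ m) (hm : 0 < m)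
    (hmt : m + t ≤ 1) :
    m * (2 * isoProfile m - isoProfile (m - t) - isoProfile (m + t)) ≤
      3 * t ^ 2 / sqrtOneSubLog m := by
  have left : (m - t) * (m * (sqrtOneSubLog m - sqrtOneSubLog (m - t))) ≤
      (m - t) * (-t / (sqrtOneSubLog m + sqrtOneSubLog (m - t))) := by
    rcases htm.eq_or_lt with rfl | htm
    · simp
    · have bound := mul_sqrtOneSubLog_sub_le hm.le (by linarith) (sub_pos.2 htm) (by linarith)
      rw [show m - t - m = -t by ring] at bound
      exact mul_le_mul_of_nonneg_left bound (by linarith)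
  have right : (m + t) * (m * (sqrtOneSubLog m - sqrtOneSubLog (m + t))) ≤
      (m + t) * (t / (sqrtOneSubLog m + sqrtOneSubLog (m + t))) := by
    have bound := mul_sqrtOneSubLog_sub_le hm.le (by linarith) (by linarith : 0 < m + t) hmt
    rw [add_sub_cancel_left] at bound
    exact mul_le_mul_of_nonneg_left bound (by linarith)
  calc m * (2 * isoProfile m - isoProfile (m - t) - isoProfile (m + t))
      = (m - t) * (m * (sqrtOneSubLog m - sqrtOneSubLog (m - t))) +
          (m + t) * (m * (sqrtOneSubLog m - sqrtOneSubLog (m + t))) := by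
        unfold isoProfile; ring
    _ ≤ (m - t) * (-t / (sqrtOneSubLog m + sqrtOneSubLog (m - t))) +
          (m + t) * (t / (sqrtOneSubLog m + sqrtOneSubLog (m + t))) := add_le_add left right
    _ = t * ((m + t) / (sqrtOneSubLog m + sqrtOneSubLog (m + t)) -
          (m - t) / (sqrtOneSubLog m + sqrtOneSubLog (m - t))) := by ring
    _ ≤ t * (3 * t / sqrtOneSubLog m) := by
        gcongr
        exact div_sub_div_sqrtOneSubLog_le ht htm hm hmt
    _ = 3 * t ^ 2 / sqrtOneSubLog m := by ring

lemma isoProfile_mul_second_difference_le {m t : ℝ} (ht : 0 ≤ t) (htm : t ≤ m)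
    (hmt : m + t ≤ 1) :
    isoProfile m * (2 * isoProfile m - isoProfile (m - t) - isoProfile (m + t)) ≤ 3 * t ^ 2 := by
  rcases (ht.trans htm).eq_or_lt with rfl | hm
  · rw [isoProfile_zero, zero_mul]
    positivity
  have one_le := one_le_sqrtOneSubLog hm.le (by linarith)
  calc isoProfile m * (2 * isoProfile m - isoProfile (m - t) - isoProfile (m + t))
      = (sqrtOneSubLog m - 1) *
          (m * (2 * isoProfile m - isoProfile (m - t) - isoProfile (m + t))) := by
        rw [isoProfile]; ring
    _ ≤ (sqrtOneSubLog m - 1) * (3 * t ^ 2 / sqrtOneSubLog m) :=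
        mul_le_mul_of_nonneg_left (mul_isoProfile_second_difference_le ht htm hm hmt)
          (by linarith)
    _ ≤ sqrtOneSubLog m * (3 * t ^ 2 / sqrtOneSubLog m) := by gcongr; linarith
    _ = 3 * t ^ 2 := by field_simp

theorem isoProfile_two_point {a b : ℝ} (ha : a ∈ Set.Icc (0 : ℝ) 1) (hb : b ∈ Set.Icc (0 : ℝ) 1) :
    isoProfile ((a + b) / 2) ≤ √(((isoProfile a + isoProfile b) / 2) ^ 2 + (a - b) ^ 2) := by
  wlog hab : a ≤ b generalizing a b
  · simpa only [add_comm, sub_sq_comm] using this hb ha (le_of_not_ge hab)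
  have second_difference := isoProfile_mul_second_difference_le (m := (a + b) / 2)
    (t := (b - a) / 2) (by linarith) (by linarith [ha.1]) (by linarith [hb.2])
  rw [show (a + b) / 2 - (b - a) / 2 = a by ring, show (a + b) / 2 + (b - a) / 2 = b by ring]
    at second_difference
  apply Real.le_sqrt_of_sq_le
  -- `x² - y² ≤ 2 x (x - y)`, where `x` and `y` are the values of the profile at the midpoint and
  -- on average.
  nlinarith [sq_nonneg (isoProfile ((a + b) / 2) - (isoProfile a + isoProfile b) / 2),
    sq_nonneg (a - b)]

lemma sqrt_neg_log_le {p : ℝ} (hp₀ : 0 < p) (hp : p ≤ 1 / 2) :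
    √(-Real.log p) ≤ 4 * (sqrtOneSubLog p - 1) := by
  have log_two_le : Real.log 2 ≤ -Real.log p := by
    rw [← Real.log_inv]
    exact Real.log_le_log two_pos (by rw [le_inv_comm₀ two_pos hp₀]; linarith)
  have three_fifths_le : 3 / 5 ≤ √(-Real.log p) :=
    Real.le_sqrt_of_sq_le (by linarith [Real.log_two_gt_d9])
  have sq_sqrt : √(-Real.log p) ^ 2 = -Real.log p :=
    Real.sq_sqrt (by linarith [Real.log_two_gt_d9])
  have one_add_le : 1 + √(-Real.log p) / 4 ≤ sqrtOneSubLog p :=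
    Real.le_sqrt_of_sq_le (by nlinarith)
  linarith

lemma var_mul_sqrt_log_le_isoProfile {p : ℝ} (hp₀ : 0 < p) (hp : p ≤ 1 / 2) :
    1 / 8 * (p - p ^ 2) * √(Real.log (1 / (p - p ^ 2))) ≤ isoProfile p := by
  have log_le : Real.log (1 / (p - p ^ 2)) ≤ 2 ^ 2 * -Real.log p := by
    have sq_le : p ^ 2 ≤ p - p ^ 2 := by nlinarith
    have log_sq_le := Real.log_le_log (by positivity) sq_le
    rw [Real.log_pow] at log_sq_le
    rw [one_div, Real.log_inv]
    push_cast at log_sq_le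
    linarith [Real.log_nonpos hp₀.le (by linarith)]
  have sqrt_log_le : √(Real.log (1 / (p - p ^ 2))) ≤ 2 * √(-Real.log p) := by
    refine (Real.sqrt_le_sqrt log_le).trans_eq ?_
    rw [Real.sqrt_mul (by positivity), Real.sqrt_sq zero_le_two]
  calc 1 / 8 * (p - p ^ 2) * √(Real.log (1 / (p - p ^ 2)))
      ≤ 1 / 8 * p * (2 * (4 * (sqrtOneSubLog p - 1))) := by
        gcongr
        · nlinarith
        · exact sqrt_log_le.trans (by gcongr; exact sqrt_neg_log_le hp₀ hp)
    _ = isoProfile p := by rw [isoProfile]; ring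

end Profile

theorem isoProfile_hcExp_le {n : ℕ} (f : (Fin n → Bool) → Bool) :
    isoProfile (hcExp n (toReal f)) ≤ hcExp n fun x => √(sens f x) :=
  le_hcExp_sqrt_sens_of_two_point isoProfile_zero.le isoProfile_one.le
    (fun _ => isoProfile_nonneg) (fun _ ha _ hb => isoProfile_two_point ha hb) f

theorem talagrand_isoperimetry :
    ∃ c : ℝ, 0 < c ∧ ∀ (n : ℕ) (f : (Fin n → Bool) → Bool), 0 < hcVar n f →
      hcExp n (fun x => Real.sqrt (sens f x)) ≥
        c * hcVar n f * Real.sqrt (Real.log (1 / hcVar n f)) := by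
  refine ⟨1 / 8, by norm_num, fun n f var_pos => ?_⟩
  wlog mean_le : hcExp n (toReal f) ≤ 1 / 2 generalizing f
  · simpa only [hcVar_not, sens_not] using this (fun x => !f x) (by rwa [hcVar_not])
      (by rw [hcExp_toReal_not]; linarith)
  have mean_pos : 0 < hcExp n (toReal f) :=
    var_pos.trans_le (sub_le_self _ (sq_nonneg _))
  exact (var_mul_sqrt_log_le_isoProfile mean_pos mean_le).trans (isoProfile_hcExp_le f)

end
end

section
/- There exists an absolute constant c > 0 such that for all n ∈ ℕ and all functions f : {0,1}^n → {0,1} with var(f) > 0, E_x[√(s_f(x))] ≥ c · var(f) · √(log(1 + 1/(Σ_{i=1}^n I_i[f]²))). -/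
open Finset

noncomputable section

/-!
The noise stability `Stab_ρ(g) = ⟨g, T_ρ g⟩` of the mean-zero function `g = f - E[f]` is estimated
at `ρ = cos θ` from both sides.

Its derivative in `ρ` is `∑ j, E[L_j g · ∂_j T_ρ g]`. Pointwise, the vector `(1 - ρ²) ∂_j T_ρ g(x)`
collects the correlations of the bounded function `g(y)` with the deviations `x_j y_j - ρ`, which
are orthogonal with variance `1 - ρ²` when `y` is a `ρ`-correlated copy of `x`, so Bessel's
inequality bounds it by `√(1 - ρ²)`. Integrating along `ρ = cos θ` gives
`Var f - Stab_{cos θ}(g) ≤ (θ / 2) E[√s_f]`.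

Conversely, hypercontractivity gives `Stab_{1/3}(h) ≤ ‖h‖₁ ‖h‖₂`. Applied to `g` and to each of its
Doob martingale differences, whose `L¹` norms are at most half the influences, and taking the
geometric mean, it yields `Stab_{1/3}(g) ≤ Var f · W^{1/4}` with `W = ∑ i, I_i²`. By log-convexity
of `Stab` in `log ρ`, `Stab_{cos θ}(g) ≤ Var f · W^{θ² / 32}`. With `Λ = log (1 + 1 / W)` the choice
`θ = 8 / √Λ` makes the last factor at most `1 / 2` and proves the theorem when `√Λ ≥ 8`; for smaller
`Λ` the case `θ = π / 2` is already enough.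
-/

open scoped BigOperators

section Expectation

variable {ι : Type*} [Fintype ι]

lemma sq_expect_mul_mul_le {w : ι → ℝ} (hw : ∀ i, 0 ≤ w i) (f g : ι → ℝ) :
    (𝔼 i, w i * (f i * g i)) ^ 2 ≤ (𝔼 i, w i * f i ^ 2) * 𝔼 i, w i * g i ^ 2 := by
  have hCS := expect_mul_sq_le_sq_mul_sq univ (fun i => √(w i) * f i) fun i => √(w i) * g i
  simp only [mul_pow, Real.sq_sqrt (hw _)] at hCS
  refine le_of_eq_of_le ?_ hCS
  congr 1
  exact expect_congr rfl fun i _ => by linear_combination -(f i * g i) * Real.mul_self_sqrt (hw i)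

lemma expect_sq_mul_sq_le {P Q : ι → ℝ} {α β : ℝ} (hα : 0 ≤ α) (hβ : 0 ≤ β)
    (hP : 𝔼 i, P i ^ 4 ≤ α ^ 2) (hQ : 𝔼 i, Q i ^ 4 ≤ β ^ 2) :
    𝔼 i, P i ^ 2 * Q i ^ 2 ≤ α * β := by
  have hCS := expect_mul_sq_le_sq_mul_sq univ (fun i => P i ^ 2) fun i => Q i ^ 2
  simp only [← pow_mul] at hCS
  refine le_of_sq_le_sq ?_ (mul_nonneg hα hβ)
  rw [mul_pow]
  have hQ0 : 0 ≤ 𝔼 i, Q i ^ 4 := expect_nonneg fun i _ => by positivity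
  exact hCS.trans (mul_le_mul hP hQ hQ0 (sq_nonneg α))

end Expectation

section RealInequalities

lemma cos_le_exp_neg_mul_sq {θ : ℝ} (hθ : |θ| ≤ Real.pi) :
    Real.cos θ ≤ Real.exp (-(2 / Real.pi ^ 2 * θ ^ 2)) := by
  linarith [Real.cos_le_one_sub_mul_cos_sq hθ, Real.add_one_le_exp (-(2 / Real.pi ^ 2 * θ ^ 2))]

lemma exp_neg_sixteen_div_pi_sq_le_third : Real.exp (-(16 / Real.pi ^ 2)) ≤ 1 / 3 := by
  have hpi_sq : Real.pi ^ 2 ≤ 10 := by nlinarith [Real.pi_lt_d2, Real.pi_pos]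
  have hexponent : 8 / 5 ≤ 16 / Real.pi ^ 2 := by
    rw [le_div_iff₀ (by positivity)]
    linarith
  have hexp : 3 ≤ Real.exp (16 / Real.pi ^ 2) := by
    have hquad := Real.quadratic_le_exp_of_nonneg (x := 8 / 5) (by norm_num)
    linarith [Real.exp_le_exp.mpr hexponent]
  rw [Real.exp_neg, one_div]
  exact inv_anti₀ three_pos hexp

lemma cos_rpow_le_third {θ : ℝ} (hθ : 0 < θ) (hθ' : θ ≤ Real.pi / 2) :
    Real.cos θ ^ (8 / θ ^ 2) ≤ 1 / 3 := by
  have habs : |θ| ≤ Real.pi := by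
    rw [abs_of_pos hθ]
    linarith [Real.pi_pos]
  calc Real.cos θ ^ (8 / θ ^ 2)
      ≤ Real.exp (-(2 / Real.pi ^ 2 * θ ^ 2)) ^ (8 / θ ^ 2) :=
        Real.rpow_le_rpow (Real.cos_nonneg_of_mem_Icc ⟨by linarith [Real.pi_pos], hθ'⟩)
          (cos_le_exp_neg_mul_sq habs) (by positivity)
    _ = Real.exp (-(16 / Real.pi ^ 2)) := by
        rw [← Real.exp_mul]
        congr 1
        field_simp
        norm_num
    _ ≤ 1 / 3 := exp_neg_sixteen_div_pi_sq_le_third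

lemma rpow_two_div_log_le_half {W : ℝ} (hW : 0 ≤ W) (hlog : 2 ≤ Real.log (1 + 1 / W)) :
    W ^ (2 / Real.log (1 + 1 / W)) ≤ 1 / 2 := by
  have hexp : Real.exp (Real.log (1 + 1 / W)) = 1 + 1 / W := Real.exp_log (by positivity)
  set Λ := Real.log (1 + 1 / W)
  have hhalf : Real.exp (Λ / 2) ^ 2 = 1 + 1 / W := by
    rw [← hexp, ← Real.exp_nat_mul]
    congr 1
    push_cast
    ring
  have hinv : Real.exp (Λ / 2) ≤ W⁻¹ := by
    rw [one_div] at hhalf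
    nlinarith [Real.add_one_le_exp (Λ / 2)]
  have hle : W ≤ Real.exp (-(Λ / 2)) := by
    rw [Real.exp_neg]
    exact le_inv_of_le_inv₀ (Real.exp_pos _) hinv
  calc W ^ (2 / Λ) ≤ Real.exp (-(Λ / 2)) ^ (2 / Λ) := Real.rpow_le_rpow hW hle (by positivity)
    _ = (Real.exp 1)⁻¹ := by
        rw [← Real.exp_mul, ← Real.exp_neg]
        congr 1
        field_simp
    _ ≤ 1 / 2 := by
        rw [one_div]
        exact inv_anti₀ two_pos (by linarith [Real.add_one_le_exp 1])

end RealInequalities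

section Characters

variable {n : ℕ}

/-- The sign `(-1)^b` of a bit `b`, translating `{0,1}` into `{1,-1}`. -/
def boolSign (b : Bool) : ℝ := if b then -1 else 1

lemma boolSign_mul_self (b : Bool) : boolSign b * boolSign b = 1 := by
  cases b <;> simp [boolSign]

lemma boolSign_not (b : Bool) : boolSign (!b) = -boolSign b := by
  cases b <;> simp [boolSign]

lemma hcExp_eq_expect (g : (Fin n → Bool) → ℝ) : hcExp n g = 𝔼 x, g x := by
  simp [hcExp, Fintype.expect_eq_sum_div_card]

lemma fcoef_eq_expect (g : (Fin n → Bool) → ℝ) (S : Finset (Fin n)) :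
    fcoef n g S = 𝔼 x, g x * chi S x :=
  hcExp_eq_expect _

lemma hcFlip_involutive (i : Fin n) : Function.Involutive fun x => hcFlip x i := fun x => by
  simp [hcFlip]

lemma hcFlip_apply_self (x : Fin n → Bool) (i : Fin n) : hcFlip x i i = !(x i) := by
  simp [hcFlip]

lemma hcFlip_apply_of_ne (x : Fin n → Bool) {i j : Fin n} (h : j ≠ i) : hcFlip x i j = x j := by
  simp [hcFlip, h]

lemma expect_comp_hcFlip (i : Fin n) (g : (Fin n → Bool) → ℝ) :
    𝔼 x, g (hcFlip x i) = 𝔼 x, g x :=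
  Fintype.expect_bijective _ (hcFlip_involutive i).bijective _ _ fun _ => rfl

lemma chi_eq_prod_boolSign (S : Finset (Fin n)) (x : Fin n → Bool) :
    chi S x = ∏ i ∈ S, boolSign (x i) := rfl

lemma chi_empty (x : Fin n → Bool) : chi ∅ x = 1 := prod_empty

lemma chi_singleton (i : Fin n) (x : Fin n → Bool) : chi {i} x = boolSign (x i) :=
  prod_singleton _ _

lemma chi_insert {S : Finset (Fin n)} {i : Fin n} (h : i ∉ S) (x : Fin n → Bool) :
    chi (insert i S) x = boolSign (x i) * chi S x :=
  prod_insert h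

lemma chi_mul_self (S : Finset (Fin n)) (x : Fin n → Bool) : chi S x * chi S x = 1 := by
  simp only [chi_eq_prod_boolSign, ← prod_mul_distrib, boolSign_mul_self, prod_const_one]

lemma chi_hcFlip_of_notMem {S : Finset (Fin n)} {i : Fin n} (h : i ∉ S) (x : Fin n → Bool) :
    chi S (hcFlip x i) = chi S x :=
  prod_congr rfl fun j hj => by rw [hcFlip_apply_of_ne x (ne_of_mem_of_not_mem hj h)]

lemma chi_hcFlip_of_mem {S : Finset (Fin n)} {i : Fin n} (h : i ∈ S) (x : Fin n → Bool) :
    chi S (hcFlip x i) = -chi S x := by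
  rw [← insert_erase h, chi_insert (notMem_erase i S), chi_insert (notMem_erase i S),
    chi_hcFlip_of_notMem (notMem_erase i S), hcFlip_apply_self, boolSign_not, neg_mul]

lemma expect_chi_mul_chi (S T : Finset (Fin n)) :
    𝔼 x, chi S x * chi T x = if S = T then 1 else 0 := by
  split_ifs with h
  · simp only [h, chi_mul_self, Fintype.expect_one]
  · obtain ⟨i, hi⟩ : ∃ i, ¬(i ∈ S ↔ i ∈ T) := by
      simpa only [Finset.ext_iff, not_forall] using h
    have hneg : ∀ x, chi S (hcFlip x i) * chi T (hcFlip x i) = -(chi S x * chi T x) := by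
      intro x
      by_cases hS : i ∈ S
      · rw [chi_hcFlip_of_mem hS, chi_hcFlip_of_notMem fun hT => hi ⟨fun _ => hT, fun _ => hS⟩,
          neg_mul]
      · have hT : i ∈ T := by_contra fun hT => hi ⟨fun h => (hS h).elim, fun h => (hT h).elim⟩
        rw [chi_hcFlip_of_notMem hS, chi_hcFlip_of_mem hT, mul_neg]
    have hself := expect_comp_hcFlip i fun x => chi S x * chi T x
    simp only [hneg, expect_neg_distrib] at hself
    linarith

end Characters

section NoiseKernel

variable {n : ℕ}

/-- The density, with respect to the uniform measure, of a point `y` that is correlated with `x`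
coordinatewise: the signs of `x i` and `y i` have correlation `r i`. -/
def noiseKernel (r : Fin n → ℝ) (x y : Fin n → Bool) : ℝ :=
  ∏ i, (1 + r i * (boolSign (x i) * boolSign (y i)))

/-- The noise operator `T_r`, with a separate correlation parameter for each coordinate. -/
def noiseOp (r : Fin n → ℝ) (g : (Fin n → Bool) → ℝ) (x : Fin n → Bool) : ℝ :=
  𝔼 y, g y * noiseKernel r x y

lemma noiseKernel_comm (r : Fin n → ℝ) (x y : Fin n → Bool) :
    noiseKernel r x y = noiseKernel r y x := by
  simp only [noiseKernel, mul_comm (boolSign (x _))]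

lemma noiseKernel_eq_sum_chi (r : Fin n → ℝ) (x y : Fin n → Bool) :
    noiseKernel r x y = ∑ S : Finset (Fin n), (∏ i ∈ S, r i) * (chi S x * chi S y) := by
  simp only [noiseKernel, prod_one_add, powerset_univ, chi_eq_prod_boolSign, prod_mul_distrib]

lemma noiseKernel_nonneg {r : Fin n → ℝ} (hr : ∀ i, |r i| ≤ 1) (x y : Fin n → Bool) :
    0 ≤ noiseKernel r x y := by
  refine prod_nonneg fun i _ => ?_
  obtain ⟨hl, hu⟩ := abs_le.mp (hr i)
  cases x i <;> cases y i <;> simp [boolSign] <;> linarith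

lemma noiseKernel_one (x y : Fin n → Bool) :
    noiseKernel (fun _ => 1) x y = if x = y then 2 ^ n else 0 := by
  split_ifs with h
  · simp only [noiseKernel, h, boolSign_mul_self]
    norm_num
  · obtain ⟨i, hi⟩ := Function.ne_iff.mp h
    refine prod_eq_zero (mem_univ i) ?_
    cases hx : x i <;> cases hy : y i <;> simp_all [boolSign]

lemma noiseOp_one (g : (Fin n → Bool) → ℝ) : noiseOp (fun _ => 1) g = g := by
  ext x
  rw [noiseOp, Fintype.expect_eq_sum_div_card]
  simp [noiseKernel_one]

lemma noiseOp_chi (r : Fin n → ℝ) (S : Finset (Fin n)) (x : Fin n → Bool) :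
    noiseOp r (chi S) x = (∏ i ∈ S, r i) * chi S x := by
  have hexpand : ∀ y, chi S y * noiseKernel r x y =
      ∑ T : Finset (Fin n), (∏ i ∈ T, r i) * chi T x * (chi S y * chi T y) := fun y => by
    rw [noiseKernel_eq_sum_chi, mul_sum]
    exact sum_congr rfl fun T _ => by ring
  simp [noiseOp, hexpand, expect_sum_comm, ← mul_expect, expect_chi_mul_chi]

lemma expect_noiseKernel (r : Fin n → ℝ) (x : Fin n → Bool) : 𝔼 y, noiseKernel r x y = 1 := by
  simpa [noiseOp, chi_empty] using noiseOp_chi r ∅ x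

lemma fcoef_noiseOp (r : Fin n → ℝ) (g : (Fin n → Bool) → ℝ) (S : Finset (Fin n)) :
    fcoef n (noiseOp r g) S = (∏ i ∈ S, r i) * fcoef n g S := by
  calc fcoef n (noiseOp r g) S = 𝔼 x, 𝔼 y, g y * (chi S x * noiseKernel r y x) := by
        simp only [fcoef_eq_expect, noiseOp, expect_mul, noiseKernel_comm r, mul_assoc,
          mul_comm (chi S _)]
    _ = 𝔼 y, g y * noiseOp r (chi S) y := by
        rw [expect_comm]
        simp only [noiseOp, mul_expect]
    _ = (∏ i ∈ S, r i) * fcoef n g S := by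
        simp only [noiseOp_chi, fcoef_eq_expect, mul_expect, mul_left_comm]

lemma sum_fcoef_mul_chi (g : (Fin n → Bool) → ℝ) (x : Fin n → Bool) :
    ∑ S : Finset (Fin n), fcoef n g S * chi S x = g x := by
  calc ∑ S : Finset (Fin n), fcoef n g S * chi S x
      = 𝔼 y, ∑ S : Finset (Fin n), g y * (chi S x * chi S y) := by
        rw [expect_sum_comm]
        simp only [fcoef_eq_expect, expect_mul, mul_assoc, mul_comm (chi _ x)]
    _ = noiseOp (fun _ => 1) g x := by
        simp only [noiseOp, noiseKernel_eq_sum_chi, prod_const_one, one_mul, mul_sum]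
    _ = g x := by rw [noiseOp_one]

lemma expect_mul_eq_sum_fcoef (g h : (Fin n → Bool) → ℝ) :
    𝔼 x, g x * h x = ∑ S : Finset (Fin n), fcoef n g S * fcoef n h S := by
  calc 𝔼 x, g x * h x = 𝔼 x, ∑ S : Finset (Fin n), g x * chi S x * fcoef n h S := by
        refine expect_congr rfl fun x _ => ?_
        rw [← sum_fcoef_mul_chi h x, mul_sum]
        exact sum_congr rfl fun S _ => by ring
    _ = ∑ S : Finset (Fin n), fcoef n g S * fcoef n h S := by
        simp only [expect_sum_comm, ← expect_mul, fcoef_eq_expect g]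

lemma expect_abs_noiseOp_le {r : Fin n → ℝ} (hr : ∀ i, |r i| ≤ 1) (g : (Fin n → Bool) → ℝ) :
    𝔼 x, |noiseOp r g x| ≤ 𝔼 x, |g x| := by
  calc 𝔼 x, |noiseOp r g x| ≤ 𝔼 x, 𝔼 y, |g y| * noiseKernel r y x := by
        refine expect_le_expect fun x _ =>
          (abs_expect_le _ _).trans_eq (expect_congr rfl fun y _ => ?_)
        rw [abs_mul, abs_of_nonneg (noiseKernel_nonneg hr x y), noiseKernel_comm]
    _ = 𝔼 y, |g y| := by
        rw [expect_comm]
        simp only [← mul_expect, expect_noiseKernel, mul_one]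

end NoiseKernel

section NoiseStability

variable {n : ℕ}

/-- The noise stability `⟨g, T_ρ g⟩` of `g` at correlation `ρ`. -/
def noiseStab (ρ : ℝ) (g : (Fin n → Bool) → ℝ) : ℝ :=
  𝔼 x, g x * noiseOp (fun _ => ρ) g x

lemma noiseStab_eq_sum (ρ : ℝ) (g : (Fin n → Bool) → ℝ) :
    noiseStab ρ g = ∑ S : Finset (Fin n), ρ ^ #S * fcoef n g S ^ 2 := by
  rw [noiseStab, expect_mul_eq_sum_fcoef]
  simp only [fcoef_noiseOp, prod_const, mul_left_comm, sq]

lemma noiseStab_one (g : (Fin n → Bool) → ℝ) : noiseStab 1 g = 𝔼 x, g x ^ 2 := by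
  simp only [noiseStab, noiseOp_one, sq]

lemma noiseStab_zero (g : (Fin n → Bool) → ℝ) : noiseStab 0 g = (𝔼 x, g x) ^ 2 := by
  simp [noiseStab_eq_sum, zero_pow_eq, fcoef_eq_expect, chi_empty]

lemma noiseStab_nonneg {ρ : ℝ} (hρ : 0 ≤ ρ) (g : (Fin n → Bool) → ℝ) : 0 ≤ noiseStab ρ g := by
  rw [noiseStab_eq_sum]
  positivity

lemma noiseStab_mono {ρ σ : ℝ} (hρ : 0 ≤ ρ) (h : ρ ≤ σ) (g : (Fin n → Bool) → ℝ) :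
    noiseStab ρ g ≤ noiseStab σ g := by
  simp only [noiseStab_eq_sum]
  gcongr

lemma noiseStab_le_rpow_mul_rpow {p ρ : ℝ} (hp : 1 ≤ p) (hρ : 0 ≤ ρ)
    (g : (Fin n → Bool) → ℝ) :
    noiseStab ρ g ≤ (𝔼 x, g x ^ 2) ^ (1 - p⁻¹) * noiseStab (ρ ^ p) g ^ p⁻¹ := by
  have hHolder := Real.inner_le_weight_mul_Lp_of_nonneg (univ : Finset (Finset (Fin n))) hp
    (fun S => fcoef n g S ^ 2) (fun S => ρ ^ #S) (fun _ => sq_nonneg _) fun _ => pow_nonneg hρ _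
  rw [← noiseStab_one]
  simpa only [noiseStab_eq_sum, one_pow, one_mul, mul_comm (fcoef n g _ ^ 2), Real.rpow_pow_comm hρ]
    using hHolder

end NoiseStability

section CoordLaplacian

variable {n : ℕ}

/-- The coordinate Laplacian `L_i g`: the part of `g` that is odd in the coordinate `i`. -/
def coordLaplacian (g : (Fin n → Bool) → ℝ) (i : Fin n) (x : Fin n → Bool) : ℝ :=
  (g x - g (hcFlip x i)) / 2

lemma fcoef_coordLaplacian (g : (Fin n → Bool) → ℝ) (i : Fin n) (S : Finset (Fin n)) :
    fcoef n (coordLaplacian g i) S = if i ∈ S then fcoef n g S else 0 := by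
  have hflip : 𝔼 x, g (hcFlip x i) * chi S x = 𝔼 x, g x * chi S (hcFlip x i) := by
    rw [← expect_comp_hcFlip i fun x => g x * chi S (hcFlip x i)]
    simp only [hcFlip_involutive i _]
  have hsplit : fcoef n (coordLaplacian g i) S =
      (𝔼 x, g x * chi S x - 𝔼 x, g x * chi S (hcFlip x i)) / 2 := by
    rw [← hflip, ← expect_sub_distrib, expect_div, fcoef_eq_expect]
    exact expect_congr rfl fun x _ => by rw [coordLaplacian]; ring
  rw [hsplit]
  split_ifs with h
  · simp [chi_hcFlip_of_mem h, expect_neg_distrib, fcoef_eq_expect]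
  · simp [chi_hcFlip_of_notMem h]

lemma derivOn_sq (g : (Fin n → Bool) → ℝ) (i : Fin n) (x : Fin n → Bool) :
    derivOn g i x ^ 2 = (2 * coordLaplacian g i x) ^ 2 := by
  have hself := Function.update_eq_self i x
  cases hx : x i <;> rw [hx] at hself <;>
    simp only [derivOn, coordLaplacian, hcFlip, hx, Bool.not_true, Bool.not_false, hself] <;> ring

lemma gradNorm2_eq (g : (Fin n → Bool) → ℝ) (x : Fin n → Bool) :
    gradNorm2 g x = 2 * √(∑ i, coordLaplacian g i x ^ 2) := by
  rw [gradNorm2, ← Real.sqrt_sq (zero_le_two (α := ℝ)), ← Real.sqrt_mul (sq_nonneg 2), mul_sum]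
  simp only [derivOn_sq, mul_pow]

end CoordLaplacian

section NoiseGradient

variable {n : ℕ}

/-- The partial derivative of `noiseOp r g` in the parameter `r j`, in which `noiseOp r g` is
affine. -/
def partialNoiseOp (r : Fin n → ℝ) (j : Fin n) (g : (Fin n → Bool) → ℝ) (x : Fin n → Bool) : ℝ :=
  noiseOp (Function.update r j 1) g x - noiseOp (Function.update r j 0) g x

/-- The deviation of the product of the signs of `x j` and `y j` from its mean `r j` under the
density `noiseKernel r x` of `y`. -/
def noiseDev (r : Fin n → ℝ) (x y : Fin n → Bool) (j : Fin n) : ℝ :=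
  boolSign (x j) * boolSign (y j) - r j

lemma fcoef_partialNoiseOp (r : Fin n → ℝ) (j : Fin n) (g : (Fin n → Bool) → ℝ)
    (S : Finset (Fin n)) :
    fcoef n (partialNoiseOp r j g) S =
      if j ∈ S then (∏ i ∈ S.erase j, r i) * fcoef n g S else 0 := by
  have hsub : fcoef n (partialNoiseOp r j g) S =
      fcoef n (noiseOp (Function.update r j 1) g) S -
        fcoef n (noiseOp (Function.update r j 0) g) S := by
    simp only [fcoef_eq_expect, partialNoiseOp, sub_mul, expect_sub_distrib]
  rw [hsub, fcoef_noiseOp, fcoef_noiseOp]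
  split_ifs with h
  · simp [prod_update_of_mem h, sdiff_singleton_eq_erase]
  · simp [prod_update_of_notMem h]

lemma noiseKernel_update (r : Fin n → ℝ) (j : Fin n) (t : ℝ) (x y : Fin n → Bool) :
    noiseKernel (Function.update r j t) x y = (1 + t * (boolSign (x j) * boolSign (y j))) *
      ∏ i ∈ univ.erase j, (1 + r i * (boolSign (x i) * boolSign (y i))) := by
  rw [noiseKernel, ← mul_prod_erase _ _ (mem_univ j), Function.update_self]
  congr 1
  exact prod_congr rfl fun i hi => by rw [Function.update_of_ne (ne_of_mem_erase hi)]

lemma noiseDev_mul_noiseKernel (r : Fin n → ℝ) (x y : Fin n → Bool) (j : Fin n) :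
    noiseDev r x y j * noiseKernel r x y =
      (1 - r j ^ 2) * (noiseKernel (Function.update r j 1) x y -
        noiseKernel (Function.update r j 0) x y) := by
  have hK : noiseKernel r x y = noiseKernel (Function.update r j (r j)) x y := by
    rw [Function.update_eq_self]
  have hsq : (boolSign (x j) * boolSign (y j)) ^ 2 = 1 := by
    rw [mul_pow, sq, sq, boolSign_mul_self, boolSign_mul_self, one_mul]
  rw [hK, noiseKernel_update, noiseKernel_update, noiseKernel_update, noiseDev]
  linear_combination r j * (∏ i ∈ univ.erase j, (1 + r i * (boolSign (x i) * boolSign (y i)))) * hsq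

lemma expect_noiseDev_mul_noiseKernel (r r' : Fin n → ℝ) (x : Fin n → Bool) (j : Fin n) :
    𝔼 y, noiseDev r x y j * noiseKernel r' x y = r' j - r j := by
  have hmean := noiseOp_chi r' {j} x
  simp only [noiseOp, chi_singleton, prod_singleton] at hmean
  simp only [noiseDev, sub_mul, expect_sub_distrib, mul_assoc, ← mul_expect, hmean,
    expect_noiseKernel, mul_one]
  linear_combination r' j * boolSign_mul_self (x j)

lemma expect_noiseDev_mul_noiseDev (r : Fin n → ℝ) (x : Fin n → Bool) (j k : Fin n) :
    𝔼 y, noiseKernel r x y * (noiseDev r x y j * noiseDev r x y k) =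
      if j = k then 1 - r j ^ 2 else 0 := by
  calc 𝔼 y, noiseKernel r x y * (noiseDev r x y j * noiseDev r x y k)
      = 𝔼 y, (1 - r j ^ 2) * (noiseDev r x y k * noiseKernel (Function.update r j 1) x y -
          noiseDev r x y k * noiseKernel (Function.update r j 0) x y) := by
        refine expect_congr rfl fun y _ => ?_
        linear_combination noiseDev r x y k * noiseDev_mul_noiseKernel r x y j
    _ = (1 - r j ^ 2) * (Function.update r j 1 k - Function.update r j 0 k) := by
        rw [← mul_expect, expect_sub_distrib, expect_noiseDev_mul_noiseKernel,
          expect_noiseDev_mul_noiseKernel, sub_sub_sub_cancel_right]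
    _ = if j = k then 1 - r j ^ 2 else 0 := by
        split_ifs with h
        · simp [h]
        · simp [Function.update_of_ne (Ne.symm h)]

lemma expect_noiseKernel_mul_sum_noiseDev_sq (r a : Fin n → ℝ) (x : Fin n → Bool) :
    𝔼 y, noiseKernel r x y * (∑ j, a j * noiseDev r x y j) ^ 2 =
      ∑ j, (1 - r j ^ 2) * a j ^ 2 := by
  calc 𝔼 y, noiseKernel r x y * (∑ j, a j * noiseDev r x y j) ^ 2
      = 𝔼 y, ∑ j, ∑ k,
          a j * a k * (noiseKernel r x y * (noiseDev r x y j * noiseDev r x y k)) := by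
        refine expect_congr rfl fun y _ => ?_
        rw [sq, sum_mul_sum, mul_sum]
        refine sum_congr rfl fun j _ => ?_
        rw [mul_sum]
        exact sum_congr rfl fun k _ => by ring
    _ = ∑ j, (1 - r j ^ 2) * a j ^ 2 := by
        simp only [expect_sum_comm, ← mul_expect, expect_noiseDev_mul_noiseDev, mul_ite, mul_zero,
          sum_ite_eq, mem_univ, if_true]
        exact sum_congr rfl fun j _ => by ring

lemma one_sub_sq_mul_partialNoiseOp (r : Fin n → ℝ) (j : Fin n) (g : (Fin n → Bool) → ℝ)
    (x : Fin n → Bool) :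
    (1 - r j ^ 2) * partialNoiseOp r j g x =
      𝔼 y, noiseKernel r x y * (g y * noiseDev r x y j) := by
  rw [partialNoiseOp, noiseOp, noiseOp, ← expect_sub_distrib, mul_expect]
  exact expect_congr rfl fun y _ => by linear_combination -g y * noiseDev_mul_noiseKernel r x y j

lemma sum_mul_partialNoiseOp_le {r : Fin n → ℝ} (hr : ∀ i, |r i| ≤ 1)
    {g : (Fin n → Bool) → ℝ} (hg : ∀ x, |g x| ≤ 1) (a : Fin n → ℝ) (x : Fin n → Bool) :
    ∑ j, a j * ((1 - r j ^ 2) * partialNoiseOp r j g x) ≤ √(∑ j, (1 - r j ^ 2) * a j ^ 2) := by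
  have hsum : ∑ j, a j * ((1 - r j ^ 2) * partialNoiseOp r j g x) =
      𝔼 y, noiseKernel r x y * (g y * ∑ j, a j * noiseDev r x y j) := by
    simp only [one_sub_sq_mul_partialNoiseOp, mul_expect, ← expect_sum_comm, mul_sum,
      mul_left_comm]
  have hmass : 𝔼 y, noiseKernel r x y * g y ^ 2 ≤ 1 := by
    rw [← expect_noiseKernel r x]
    exact expect_le_expect fun y _ => mul_le_of_le_one_right (noiseKernel_nonneg hr x y)
      ((sq_le_one_iff_abs_le_one _).mpr (hg y))
  refine Real.le_sqrt_of_sq_le ?_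
  rw [hsum, ← expect_noiseKernel_mul_sum_noiseDev_sq]
  exact (sq_expect_mul_mul_le (noiseKernel_nonneg hr x) _ _).trans <|
    mul_le_of_le_one_left (expect_nonneg fun y _ =>
      mul_nonneg (noiseKernel_nonneg hr x y) (sq_nonneg _)) hmass

end NoiseGradient

section NoiseStabilityDecay

variable {n : ℕ}

lemma sum_expect_coordLaplacian_mul_partialNoiseOp (ρ : ℝ) (g : (Fin n → Bool) → ℝ) :
    ∑ j, 𝔼 x, coordLaplacian g j x * partialNoiseOp (fun _ => ρ) j g x =
      ∑ S : Finset (Fin n), #S * ρ ^ (#S - 1) * fcoef n g S ^ 2 := by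
  have hcoord : ∀ j, 𝔼 x, coordLaplacian g j x * partialNoiseOp (fun _ => ρ) j g x =
      ∑ S : Finset (Fin n), if j ∈ S then ρ ^ (#S - 1) * fcoef n g S ^ 2 else 0 := fun j => by
    rw [expect_mul_eq_sum_fcoef]
    refine sum_congr rfl fun S _ => ?_
    rw [fcoef_coordLaplacian, fcoef_partialNoiseOp]
    split_ifs with h
    · rw [prod_const, card_erase_of_mem h]
      ring
    · rw [zero_mul]
  simp only [hcoord]
  rw [sum_comm]
  simp only [sum_ite_mem, univ_inter, sum_const, nsmul_eq_mul, mul_assoc]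

lemma hasDerivAt_noiseStab (ρ : ℝ) (g : (Fin n → Bool) → ℝ) :
    HasDerivAt (fun ρ => noiseStab ρ g)
      (∑ j, 𝔼 x, coordLaplacian g j x * partialNoiseOp (fun _ => ρ) j g x) ρ := by
  rw [sum_expect_coordLaplacian_mul_partialNoiseOp]
  simp only [noiseStab_eq_sum]
  exact HasDerivAt.fun_sum fun S _ => (hasDerivAt_pow #S ρ).mul_const _

lemma one_sub_sq_mul_sum_expect_le {ρ : ℝ} (hρ : |ρ| ≤ 1) {g : (Fin n → Bool) → ℝ}
    (hg : ∀ x, |g x| ≤ 1) :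
    (1 - ρ ^ 2) * ∑ j, 𝔼 x, coordLaplacian g j x * partialNoiseOp (fun _ => ρ) j g x ≤
      √(1 - ρ ^ 2) * ((𝔼 x, gradNorm2 g x) / 2) := by
  have hρ' : 0 ≤ 1 - ρ ^ 2 := sub_nonneg.mpr ((sq_le_one_iff_abs_le_one ρ).mpr hρ)
  rw [← expect_sum_comm, mul_expect, expect_div, mul_expect]
  refine expect_le_expect fun x _ => ?_
  calc (1 - ρ ^ 2) * ∑ j, coordLaplacian g j x * partialNoiseOp (fun _ => ρ) j g x
      = ∑ j, coordLaplacian g j x * ((1 - ρ ^ 2) * partialNoiseOp (fun _ => ρ) j g x) := by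
        simp only [mul_sum, mul_left_comm]
    _ ≤ √(∑ j, (1 - ρ ^ 2) * coordLaplacian g j x ^ 2) :=
        sum_mul_partialNoiseOp_le (fun _ => hρ) hg _ x
    _ = √(1 - ρ ^ 2) * (gradNorm2 g x / 2) := by
        rw [← mul_sum, Real.sqrt_mul hρ', gradNorm2_eq, mul_div_cancel_left₀ _ two_ne_zero]

lemma noiseStab_one_sub_noiseStab_cos_le {g : (Fin n → Bool) → ℝ} (hg : ∀ x, |g x| ≤ 1) {θ : ℝ}
    (hθ : 0 ≤ θ) (hθ' : θ ≤ Real.pi) :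
    noiseStab 1 g - noiseStab (Real.cos θ) g ≤ θ / 2 * 𝔼 x, gradNorm2 g x := by
  have hderiv : ∀ t, HasDerivAt (fun t => noiseStab (Real.cos t) g)
      ((∑ j, 𝔼 x, coordLaplacian g j x * partialNoiseOp (fun _ => Real.cos t) j g x) *
        -Real.sin t) t := fun t =>
    (hasDerivAt_noiseStab (Real.cos t) g).comp t (Real.hasDerivAt_cos t)
  have hlower : ∀ t ∈ Set.Ioo 0 Real.pi,
      -((𝔼 x, gradNorm2 g x) / 2) ≤ deriv (fun t => noiseStab (Real.cos t) g) t := by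
    intro t ht
    have hsin : 0 < Real.sin t := Real.sin_pos_of_mem_Ioo ht
    have hbound := one_sub_sq_mul_sum_expect_le (Real.abs_cos_le_one t) hg
    rw [← Real.sin_sq, Real.sqrt_sq hsin.le, sq, mul_assoc, mul_le_mul_iff_right₀ hsin] at hbound
    rw [(hderiv t).deriv]
    linarith
  have hmvt := (convex_Icc 0 Real.pi).mul_sub_le_image_sub_of_le_deriv
    (fun t _ => (hderiv t).continuousAt.continuousWithinAt)
    (fun t _ => (hderiv t).differentiableAt.differentiableWithinAt)
    (by simpa only [interior_Icc] using hlower) 0 ⟨le_rfl, Real.pi_pos.le⟩ θ ⟨hθ, hθ'⟩ hθ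
  rw [Real.cos_zero] at hmvt
  linarith

end NoiseStabilityDecay

section Hypercontractivity

variable {n : ℕ}

lemma expect_add_boolSign_mul_pow_four {P Q : (Fin n → Bool) → ℝ} {a : Fin n}
    (hP : ∀ x, P (hcFlip x a) = P x) (hQ : ∀ x, Q (hcFlip x a) = Q x) :
    𝔼 x, (P x + boolSign (x a) * Q x) ^ 4 =
      𝔼 x, P x ^ 4 + 6 * 𝔼 x, P x ^ 2 * Q x ^ 2 + 𝔼 x, Q x ^ 4 := by
  have hflip : 𝔼 x, (P x - boolSign (x a) * Q x) ^ 4 = 𝔼 x, (P x + boolSign (x a) * Q x) ^ 4 := by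
    rw [← expect_comp_hcFlip a fun x => (P x + boolSign (x a) * Q x) ^ 4]
    simp only [hP, hQ, hcFlip_apply_self, boolSign_not, neg_mul, sub_eq_add_neg]
  have hsum : 𝔼 x, (P x + boolSign (x a) * Q x) ^ 4 + 𝔼 x, (P x - boolSign (x a) * Q x) ^ 4 =
      2 * (𝔼 x, P x ^ 4 + 6 * 𝔼 x, P x ^ 2 * Q x ^ 2 + 𝔼 x, Q x ^ 4) := by
    simp only [← expect_add_distrib, mul_expect]
    refine expect_congr rfl fun x _ => ?_
    linear_combination (12 * P x ^ 2 * Q x ^ 2 +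
      2 * Q x ^ 4 * (boolSign (x a) * boolSign (x a) + 1)) * boolSign_mul_self (x a)
  linarith

lemma expect_sum_powerset_mul_chi_pow_four_le (s : Finset (Fin n)) (c : Finset (Fin n) → ℝ) :
    𝔼 x, (∑ S ∈ s.powerset, c S * chi S x) ^ 4 ≤
      (∑ S ∈ s.powerset, 3 ^ #S * c S ^ 2) ^ 2 := by
  induction s using Finset.induction_on generalizing c with
  | empty => simp [chi_empty, ← pow_mul]
  | insert a s ha ih =>
    have hnot : ∀ S ∈ s.powerset, a ∉ S := fun S hS h => ha (mem_powerset.mp hS h)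
    have hflip : ∀ (d : Finset (Fin n) → ℝ) (x : Fin n → Bool),
        ∑ S ∈ s.powerset, d S * chi S (hcFlip x a) = ∑ S ∈ s.powerset, d S * chi S x :=
      fun d x => sum_congr rfl fun S hS => by rw [chi_hcFlip_of_notMem (hnot S hS)]
    have hsplit : ∀ x, ∑ S ∈ (insert a s).powerset, c S * chi S x =
        ∑ S ∈ s.powerset, c S * chi S x +
          boolSign (x a) * ∑ S ∈ s.powerset, c (insert a S) * chi S x := fun x => by
      rw [sum_powerset_insert ha, mul_sum]
      congr 1
      exact sum_congr rfl fun S hS => by rw [chi_insert (hnot S hS), mul_left_comm]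
    have hweight : ∑ S ∈ (insert a s).powerset, (3 : ℝ) ^ #S * c S ^ 2 =
        ∑ S ∈ s.powerset, 3 ^ #S * c S ^ 2 +
          3 * ∑ S ∈ s.powerset, 3 ^ #S * c (insert a S) ^ 2 := by
      rw [sum_powerset_insert ha, mul_sum]
      congr 1
      exact sum_congr rfl fun S hS => by rw [card_insert_of_notMem (hnot S hS)]; ring
    have hP := ih c
    have hQ := ih fun S => c (insert a S)
    have hα : 0 ≤ ∑ S ∈ s.powerset, (3 : ℝ) ^ #S * c S ^ 2 := by positivity
    have hβ : 0 ≤ ∑ S ∈ s.powerset, (3 : ℝ) ^ #S * c (insert a S) ^ 2 := by positivity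
    have hPQ := expect_sq_mul_sq_le hα hβ hP hQ
    simp only [hsplit, hweight]
    rw [expect_add_boolSign_mul_pow_four (hflip c) (hflip fun S => c (insert a S))]
    nlinarith [sq_nonneg (∑ S ∈ s.powerset, (3 : ℝ) ^ #S * c (insert a S) ^ 2)]

lemma expect_pow_four_le (g : (Fin n → Bool) → ℝ) :
    𝔼 x, g x ^ 4 ≤ (∑ S : Finset (Fin n), 3 ^ #S * fcoef n g S ^ 2) ^ 2 := by
  simpa only [powerset_univ, sum_fcoef_mul_chi] using
    expect_sum_powerset_mul_chi_pow_four_le univ (fcoef n g)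

lemma expect_noiseOp_third_pow_four_le (g : (Fin n → Bool) → ℝ) :
    𝔼 x, noiseOp (fun _ => 1 / 3) g x ^ 4 ≤ noiseStab (1 / 3) g ^ 2 := by
  refine (expect_pow_four_le _).trans_eq ?_
  rw [noiseStab_eq_sum]
  congr 1
  refine sum_congr rfl fun S _ => ?_
  rw [fcoef_noiseOp, prod_const, mul_pow, sq ((1 / 3 : ℝ) ^ #S), ← mul_assoc, ← mul_assoc,
    ← mul_pow]
  norm_num

lemma noiseStab_third_le (g : (Fin n → Bool) → ℝ) :
    noiseStab (1 / 3) g ≤ (𝔼 x, |g x|) * √(𝔼 x, g x ^ 2) := by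
  set H := noiseOp (fun _ => 1 / 3) g
  set A := noiseStab (1 / 3) g
  have hA0 : 0 ≤ A := noiseStab_nonneg (by norm_num) g
  have hsq : A ^ 2 ≤ (𝔼 x, |g x|) * 𝔼 x, |g x| * H x ^ 2 := by
    have hCS := sq_expect_mul_mul_le (fun x => abs_nonneg (g x)) (fun _ => 1) fun x => |H x|
    simp only [one_pow, mul_one, one_mul, sq_abs, ← abs_mul] at hCS
    exact (pow_le_pow_left₀ hA0 (expect_le_expect fun x _ => le_abs_self _) 2).trans hCS
  have hmixed : 𝔼 x, |g x| * H x ^ 2 ≤ √(𝔼 x, g x ^ 2) * A := by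
    have hCS := expect_mul_sq_le_sq_mul_sq univ (fun x => |g x|) fun x => H x ^ 2
    simp only [sq_abs, ← pow_mul] at hCS
    rw [← Real.sqrt_sq hA0, ← Real.sqrt_mul (expect_nonneg fun x _ => sq_nonneg (g x))]
    exact Real.le_sqrt_of_sq_le <| hCS.trans <| mul_le_mul_of_nonneg_left
      (expect_noiseOp_third_pow_four_le g) (expect_nonneg fun x _ => sq_nonneg (g x))
  have hL1 : 0 ≤ 𝔼 x, |g x| := expect_nonneg fun x _ => abs_nonneg _
  rcases hA0.eq_or_lt with h | hpos
  · rw [← h]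
    positivity
  · refine le_of_mul_le_mul_right ?_ hpos
    calc A * A ≤ (𝔼 x, |g x|) * (√(𝔼 x, g x ^ 2) * A) := by
          rw [← sq]
          exact hsq.trans (mul_le_mul_of_nonneg_left hmixed hL1)
      _ = (𝔼 x, |g x|) * √(𝔼 x, g x ^ 2) * A := (mul_assoc _ _ _).symm

end Hypercontractivity

section MartingaleDifferences

variable {n : ℕ}

/-- The `i`-th Doob martingale difference of `g`, obtained from the coordinate Laplacian by
averaging over the coordinates after `i`. It carries the characters `S` with `S.max = i`. -/
def martingaleDiff (g : (Fin n → Bool) → ℝ) (i : Fin n) : (Fin n → Bool) → ℝ :=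
  noiseOp (fun k => if k ≤ i then 1 else 0) (coordLaplacian g i)

lemma fcoef_martingaleDiff (g : (Fin n → Bool) → ℝ) (i : Fin n) (S : Finset (Fin n)) :
    fcoef n (martingaleDiff g i) S = if S.max = i then fcoef n g S else 0 := by
  have hmax : S.max = i ↔ (∀ k ∈ S, k ≤ i) ∧ i ∈ S :=
    ⟨fun h => ⟨fun _ hk => le_max_of_eq hk h, mem_of_max h⟩, fun h =>
      le_antisymm (Finset.max_le fun k hk => WithBot.coe_le_coe.mpr (h.1 k hk)) (le_max h.2)⟩
  rw [martingaleDiff, fcoef_noiseOp, fcoef_coordLaplacian, prod_boole, ite_zero_mul_ite_zero,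
    one_mul]
  split_ifs <;> tauto

lemma expect_abs_martingaleDiff_le (g : (Fin n → Bool) → ℝ) (i : Fin n) :
    𝔼 x, |martingaleDiff g i x| ≤ 𝔼 x, |coordLaplacian g i x| :=
  expect_abs_noiseOp_le (fun k => by split_ifs <;> norm_num) _

lemma sum_noiseStab_martingaleDiff (ρ : ℝ) {g : (Fin n → Bool) → ℝ} (hg : 𝔼 x, g x = 0) :
    ∑ i, noiseStab ρ (martingaleDiff g i) = noiseStab ρ g := by
  simp only [noiseStab_eq_sum, fcoef_martingaleDiff]
  rw [sum_comm]
  refine sum_congr rfl fun S _ => ?_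
  rcases S.eq_empty_or_nonempty with rfl | hS
  · simp [fcoef_eq_expect, chi_empty, hg]
  · obtain ⟨m, hm⟩ := max_of_nonempty hS
    simp [hm]

lemma noiseStab_third_le_sqrt_mul_sqrt {g : (Fin n → Bool) → ℝ} (hg : 𝔼 x, g x = 0) :
    noiseStab (1 / 3) g ≤
      √(∑ i, (𝔼 x, |coordLaplacian g i x|) ^ 2) * √(𝔼 x, g x ^ 2) := by
  calc noiseStab (1 / 3) g = ∑ i, noiseStab (1 / 3) (martingaleDiff g i) :=
        (sum_noiseStab_martingaleDiff _ hg).symm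
    _ ≤ ∑ i, (𝔼 x, |coordLaplacian g i x|) * √(noiseStab 1 (martingaleDiff g i)) := by
        refine sum_le_sum fun i _ => (noiseStab_third_le _).trans ?_
        rw [noiseStab_one]
        exact mul_le_mul_of_nonneg_right (expect_abs_martingaleDiff_le g i) (Real.sqrt_nonneg _)
    _ ≤ √(∑ i, (𝔼 x, |coordLaplacian g i x|) ^ 2) *
          √(∑ i, noiseStab 1 (martingaleDiff g i)) := by
        refine (Real.sum_mul_le_sqrt_mul_sqrt _ _ _).trans_eq ?_
        simp only [Real.sq_sqrt (noiseStab_nonneg zero_le_one _)]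
    _ = √(∑ i, (𝔼 x, |coordLaplacian g i x|) ^ 2) * √(𝔼 x, g x ^ 2) := by
        rw [sum_noiseStab_martingaleDiff _ hg, noiseStab_one]

end MartingaleDifferences

section BooleanFunctions

variable {n : ℕ} (f : (Fin n → Bool) → Bool)

/-- The mean-zero function `f - E[f]` associated with a Boolean function `f`. -/
def centered (x : Fin n → Bool) : ℝ :=
  toReal f x - 𝔼 y, toReal f y

lemma toReal_eq_zero_or_one (x : Fin n → Bool) : toReal f x = 0 ∨ toReal f x = 1 := by
  cases h : f x <;> simp [toReal, h]

lemma expect_toReal_mem_Icc : 𝔼 x, toReal f x ∈ Set.Icc (0 : ℝ) 1 := by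
  constructor
  · refine expect_nonneg fun x _ => ?_
    rcases toReal_eq_zero_or_one f x with h | h <;> simp [h]
  · refine expect_le univ_nonempty fun x _ => ?_
    rcases toReal_eq_zero_or_one f x with h | h <;> simp [h]

lemma hcVar_eq : hcVar n f = (𝔼 x, toReal f x) * (1 - 𝔼 x, toReal f x) := by
  rw [hcVar, hcExp_eq_expect]
  ring

lemma hcVar_nonneg : 0 ≤ hcVar n f := by
  obtain ⟨h0, h1⟩ := expect_toReal_mem_Icc f
  rw [hcVar_eq]
  exact mul_nonneg h0 (sub_nonneg.mpr h1)

lemma abs_centered_le_one (x : Fin n → Bool) : |centered f x| ≤ 1 := by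
  obtain ⟨h0, h1⟩ := expect_toReal_mem_Icc f
  rw [centered, abs_le]
  rcases toReal_eq_zero_or_one f x with h | h <;> rw [h] <;> constructor <;> linarith

lemma expect_centered : 𝔼 x, centered f x = 0 := by
  simp [centered, expect_sub_distrib]

lemma expect_centered_sq : 𝔼 x, centered f x ^ 2 = hcVar n f := by
  set m := 𝔼 y, toReal f y with hm
  have hlin : ∀ x, centered f x ^ 2 = (1 - 2 * m) * toReal f x + m ^ 2 := fun x => by
    rw [centered, ← hm]
    rcases toReal_eq_zero_or_one f x with h | h <;> rw [h] <;> ring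
  simp only [hlin, expect_add_distrib, ← mul_expect, Fintype.expect_const]
  rw [hcVar_eq, ← hm]
  ring

lemma expect_abs_centered : 𝔼 x, |centered f x| = 2 * hcVar n f := by
  obtain ⟨h0, h1⟩ := expect_toReal_mem_Icc f
  rw [hcVar_eq]
  set m := 𝔼 y, toReal f y with hm
  have hlin : ∀ x, |centered f x| = (1 - 2 * m) * toReal f x + m := fun x => by
    rw [centered, ← hm]
    rcases toReal_eq_zero_or_one f x with h | h <;> rw [h]
    · rw [zero_sub, abs_neg, abs_of_nonneg h0]
      ring
    · rw [abs_of_nonneg (sub_nonneg.mpr h1)]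
      ring
  simp only [hlin, expect_add_distrib, ← mul_expect, Fintype.expect_const]
  rw [← hm]
  ring

lemma abs_coordLaplacian_centered (i : Fin n) (x : Fin n → Bool) :
    |coordLaplacian (centered f) i x| = (if f (hcFlip x i) = f x then 0 else 1) / 2 := by
  rw [coordLaplacian, centered, centered, sub_sub_sub_cancel_right, abs_div, abs_two]
  cases h : f x <;> cases h' : f (hcFlip x i) <;> simp [toReal, h, h']

lemma expect_abs_coordLaplacian_centered (i : Fin n) :
    𝔼 x, |coordLaplacian (centered f) i x| = influence n f i / 2 := by
  simp only [abs_coordLaplacian_centered, ← expect_div, influence, hcExp_eq_expect]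

lemma gradNorm2_centered (x : Fin n → Bool) : gradNorm2 (centered f) x = √(sens f x) := by
  have hsq : ∀ i, derivOn (centered f) i x ^ 2 = if f (hcFlip x i) ≠ f x then 1 else 0 := by
    intro i
    rw [derivOn_sq, ← sq_abs, abs_mul, abs_coordLaplacian_centered]
    by_cases h : f (hcFlip x i) = f x <;> simp [h]
  simp only [gradNorm2, hsq, sum_boole, sens]

lemma sum_influence_sq_nonneg : 0 ≤ ∑ i, influence n f i ^ 2 :=
  sum_nonneg fun _ _ => sq_nonneg _

lemma expect_sqrt_sens_nonneg : 0 ≤ 𝔼 x, √(sens f x : ℝ) :=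
  expect_nonneg fun _ _ => Real.sqrt_nonneg _

lemma noiseStab_third_centered_le :
    noiseStab (1 / 3) (centered f) ≤ hcVar n f * (∑ i, influence n f i ^ 2) ^ (1 / 4 : ℝ) := by
  have hv := hcVar_nonneg f
  have hW := sum_influence_sq_nonneg f
  set A := noiseStab (1 / 3) (centered f)
  set W := ∑ i, influence n f i ^ 2 with hWdef
  have hA : 0 ≤ A := noiseStab_nonneg (by norm_num) _
  have hvar : A ≤ 2 * hcVar n f * √(hcVar n f) := by
    simpa only [expect_abs_centered, expect_centered_sq] using noiseStab_third_le (centered f)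
  have hinf : A ≤ √W / 2 * √(hcVar n f) := by
    have hmart := noiseStab_third_le_sqrt_mul_sqrt (expect_centered f)
    simp only [expect_abs_coordLaplacian_centered, expect_centered_sq, div_pow, ← sum_div] at hmart
    rwa [← hWdef, Real.sqrt_div hW, Real.sqrt_sq zero_le_two] at hmart
  refine le_of_sq_le_sq ?_ (mul_nonneg hv (Real.rpow_nonneg hW _))
  calc A ^ 2 ≤ (2 * hcVar n f * √(hcVar n f)) * (√W / 2 * √(hcVar n f)) := by
        rw [sq]
        exact mul_le_mul hvar hinf hA (by positivity)
    _ = hcVar n f ^ 2 * √W := by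
        linear_combination hcVar n f * √W * Real.mul_self_sqrt hv
    _ = (hcVar n f * W ^ (1 / 4 : ℝ)) ^ 2 := by
        rw [mul_pow, ← Real.rpow_mul_natCast hW, Real.sqrt_eq_rpow]
        norm_num

lemma noiseStab_centered_le {p ρ : ℝ} (hp : 1 ≤ p) (hρ : 0 ≤ ρ) (hρp : ρ ^ p ≤ 1 / 3) :
    noiseStab ρ (centered f) ≤
      hcVar n f * (∑ i, influence n f i ^ 2) ^ ((4 * p)⁻¹ : ℝ) := by
  have hv := hcVar_nonneg f
  have hW := sum_influence_sq_nonneg f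
  have hstab : noiseStab (ρ ^ p) (centered f) ≤
      hcVar n f * (∑ i, influence n f i ^ 2) ^ (1 / 4 : ℝ) :=
    (noiseStab_mono (Real.rpow_nonneg hρ p) hρp _).trans (noiseStab_third_centered_le f)
  calc noiseStab ρ (centered f)
      ≤ hcVar n f ^ (1 - p⁻¹) * noiseStab (ρ ^ p) (centered f) ^ p⁻¹ := by
        simpa only [expect_centered_sq] using noiseStab_le_rpow_mul_rpow hp hρ (centered f)
    _ ≤ hcVar n f ^ (1 - p⁻¹) *
          (hcVar n f * (∑ i, influence n f i ^ 2) ^ (1 / 4 : ℝ)) ^ p⁻¹ := by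
        have := noiseStab_nonneg (Real.rpow_nonneg hρ p) (centered f)
        gcongr
    _ = hcVar n f * (∑ i, influence n f i ^ 2) ^ ((4 * p)⁻¹ : ℝ) := by
        rw [Real.mul_rpow hv (Real.rpow_nonneg hW _), ← Real.rpow_mul hW, ← mul_assoc,
          ← Real.rpow_add' hv (by simp), sub_add_cancel, Real.rpow_one, mul_inv, one_div]

lemma hcVar_sub_noiseStab_cos_le {θ : ℝ} (hθ : 0 ≤ θ) (hθ' : θ ≤ Real.pi) :
    hcVar n f - noiseStab (Real.cos θ) (centered f) ≤ θ / 2 * 𝔼 x, √(sens f x : ℝ) := by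
  simpa only [noiseStab_one, expect_centered_sq, gradNorm2_centered] using
    noiseStab_one_sub_noiseStab_cos_le (abs_centered_le_one f) hθ hθ'

lemma hcVar_le_expect_sqrt_sens : hcVar n f ≤ 𝔼 x, √(sens f x : ℝ) := by
  have hdecay := hcVar_sub_noiseStab_cos_le f (θ := Real.pi / 2) (by positivity)
    (by linarith [Real.pi_pos])
  rw [Real.cos_pi_div_two, noiseStab_zero, expect_centered] at hdecay
  nlinarith [Real.pi_le_four, expect_sqrt_sens_nonneg f]

lemma hcVar_mul_one_sub_rpow_le {θ : ℝ} (hθ : 0 < θ) (hθ' : θ ≤ Real.pi / 2) :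
    hcVar n f * (1 - (∑ i, influence n f i ^ 2) ^ (θ ^ 2 / 32)) ≤
      θ / 2 * 𝔼 x, √(sens f x : ℝ) := by
  have hp : 1 ≤ 8 / θ ^ 2 := by
    rw [one_le_div (by positivity)]
    nlinarith [Real.pi_le_four]
  have hstab := noiseStab_centered_le f hp
    (Real.cos_nonneg_of_mem_Icc ⟨by linarith [Real.pi_pos], hθ'⟩) (cos_rpow_le_third hθ hθ')
  have hexponent : (4 * (8 / θ ^ 2))⁻¹ = θ ^ 2 / 32 := by
    rw [← mul_div_assoc, inv_div]
    norm_num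
  rw [hexponent] at hstab
  linarith [hcVar_sub_noiseStab_cos_le f hθ.le (by linarith [Real.pi_pos])]

lemma hcVar_mul_sqrt_log_le (hlarge : 8 ≤ √(Real.log (1 + 1 / ∑ i, influence n f i ^ 2))) :
    hcVar n f * √(Real.log (1 + 1 / ∑ i, influence n f i ^ 2)) ≤
      8 * 𝔼 x, √(sens f x : ℝ) := by
  have hhalf := rpow_two_div_log_le_half (sum_influence_sq_nonneg f)
    (by linarith [Real.le_sqrt' (by norm_num) |>.mp hlarge])
  set Λ := Real.log (1 + 1 / ∑ i, influence n f i ^ 2)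
  have hpos : 0 < √Λ := by linarith
  have hangle : 8 / √Λ ≤ Real.pi / 2 :=
    ((div_le_one hpos).mpr hlarge).trans (by linarith [Real.two_le_pi])
  have hexponent : (8 / √Λ) ^ 2 / 32 = 2 / Λ := by
    rw [div_pow, Real.sq_sqrt (Real.sqrt_pos.mp hpos).le]
    ring
  have hnoise := hcVar_mul_one_sub_rpow_le f (div_pos (by norm_num) hpos) hangle
  rw [hexponent] at hnoise
  rw [← le_div_iff₀ hpos, mul_div_right_comm]
  nlinarith [hcVar_nonneg f]

end BooleanFunctions

theorem eldan_gross_isoperimetry :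
    ∃ c : ℝ, 0 < c ∧ ∀ (n : ℕ) (f : (Fin n → Bool) → Bool), 0 < hcVar n f →
      hcExp n (fun x => Real.sqrt (sens f x)) ≥
        c * hcVar n f * Real.sqrt (Real.log (1 + 1 / ∑ i, (influence n f i) ^ 2)) := by
  refine ⟨1 / 8, by norm_num, fun n f hvar => ?_⟩
  rw [hcExp_eq_expect]
  rcases le_total (√(Real.log (1 + 1 / ∑ i, influence n f i ^ 2))) 8 with hsmall | hlarge
  · linarith [hcVar_le_expect_sqrt_sens f, mul_le_mul_of_nonneg_left hsmall hvar.le]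
  · linarith [hcVar_mul_sqrt_log_le f hlarge]

end
end
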